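/- arXiv:1802.09490 — 2 statements merged into one kernel-verified Lean document; each statement's English description precedes it below -/
import Mathlib

section
/- Consider a Fragile CPR game with strictly increasing rate of return r. Let t_2 < t_1 < t̄ be tax rates with x^{t_2}_NE > a_{t_1}. Suppose that for every player i, k_i > q_i(x^{t_2}_NE, t_1). Then the PNE utilizations satisfy x^{t_1}_NE ≤ x^{t_2}_NE; that is, the higher tax rate yields weakly smaller utilization. -/
/-!
Fix a player who invests `c > 0` at tax `t₂`, and freeze the utilization at its equilibrium value
`X₂`. Divided by `(1 + t) ^ α`, both her rate of return `f` and its slope `f_x` depend on the tax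
only through `w = (r - t) / (1 + t)`, and `k > q` together with the concavity of `w ↦ w ^ α` says
that `f_x / f` increases with `w` (stated as a cross product, since `f` may vanish). Her first order
condition `α f + c f_x = 0` at `t₂` therefore turns into `α f + c f_x < 0` at every `t ∈ (t₂, t₁]`.

Suppose the utilization `X₁` at `t₁` were larger than `X₂`. As `f` is concave in the utilization,
`α f + d f_x < 0` persists at `(X₁, t₁)` for all `d ≥ c`, so the first order condition there forces
her investment down. Players inactive at `t₂` stay inactive because `f` decreases in the tax. Hence
nobody invests more at `t₁`, contradicting `X₂ < X₁`.
-/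

open Real Set

noncomputable section

/-- Effective rate of return of a player with sensitivity `α` and loss aversion `k`,
at utilization `x` and tax rate `t`. -/
def effRate (p r : ℝ → ℝ) (α k x t : ℝ) : ℝ :=
  if 0 ≤ r x - t then
    (r x - t) ^ α * (1 - p x) - k * (1 + t) ^ α * p x
  else
    -(k * ((t - r x) ^ α * (1 - p x) + (1 + t) ^ α * p x))

/-- Partial derivative of the effective rate of return in the utilization. -/
def effRateDx (p r : ℝ → ℝ) (α k x t : ℝ) : ℝ :=
  deriv (fun z => effRate p r α k z t) x

/-- `g_i(x,t) = α_i f_i(x,t) / (−f_{i,x}(x,t))`. -/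
def gFun (p r : ℝ → ℝ) (α k x t : ℝ) : ℝ :=
  α * effRate p r α k x t / (-effRateDx p r α k x t)

/-- Standing assumptions on the failure probability `p`. -/
structure FailureProb (p : ℝ → ℝ) : Prop where
  convexOn : ConvexOn ℝ (Ico (0:ℝ) 1) p
  strictMonoOn : StrictMonoOn p (Ico (0:ℝ) 1)
  contDiffOn : ContDiffOn ℝ 1 p (Ico (0:ℝ) 1)
  eq_one : ∀ x : ℝ, 1 ≤ x → p x = 1
  mem_unit : ∀ x : ℝ, p x ∈ Icc (0:ℝ) 1

/-- Standing assumptions on the rate of return `r`. -/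
structure RateOfReturn (r : ℝ → ℝ) : Prop where
  concaveOn : ConcaveOn ℝ (Icc (0:ℝ) 1) r
  pos : ∀ x ∈ Icc (0:ℝ) 1, 0 < r x
  strictMonoOrAnti : StrictMonoOn r (Icc (0:ℝ) 1) ∨ StrictAntiOn r (Icc (0:ℝ) 1)
  contDiffOn : ContDiffOn ℝ 1 r (Icc (0:ℝ) 1)

/-- `S_t`: the set of utilizations `x ∈ [0,1]` with `r(x) − t ≥ 0`. -/
def St (r : ℝ → ℝ) (t : ℝ) : Set ℝ := {x | x ∈ Icc (0:ℝ) 1 ∧ 0 ≤ r x - t}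

/-- The maximal tax rate `t̄` of the game. -/
def tbar {ι : Type*} [Fintype ι] (p r : ℝ → ℝ) (α k : ι → ℝ) : ℝ :=
  sSup {t : ℝ | 0 ≤ t ∧ ∃ i : ι, ∃ x ∈ Icc (0:ℝ) 1, 0 < effRate p r (α i) (k i) x t}

/-- The maximal tax rate `t̄_i` of a single player. -/
def tbarI (p r : ℝ → ℝ) (α k : ℝ) : ℝ :=
  sSup {t : ℝ | 0 ≤ t ∧ ∃ x ∈ St r t, 0 < effRate p r α k x t}

/-- `a_t` for a strictly increasing rate of return. -/
def aT (r : ℝ → ℝ) (t : ℝ) : ℝ :=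
  if t ≤ r 0 then 0 else sInf {x | x ∈ Icc (0:ℝ) 1 ∧ r x = t}

/-- The threshold `y^t_i` for a strictly decreasing rate of return. -/
def yT (p r : ℝ → ℝ) (α k t : ℝ) : ℝ :=
  if effRate p r α k 0 t ≤ 0 then 0
  else sInf {x | x ∈ St r t ∧ effRate p r α k x t = 0}

/-- `ĝ_i(x,t)`, for a strictly decreasing rate of return. -/
def gHat (p r : ℝ → ℝ) (α k x t : ℝ) : ℝ :=
  if x < yT p r α k t then gFun p r α k x t else 0

/-- The function `q_i(x,t)` for strictly increasing rate of return. -/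
def qFun (p r : ℝ → ℝ) (α x t : ℝ) : ℝ :=
  deriv r x * (1 - p x) ^ 2 /
      ((r x + 1) * deriv p x - α * deriv r x * (1 - p x) * p x) *
    ((1 + t) / (r x - t)) ^ (1 - α)

/-- `b` is a best response of a player (parameters `α`, `k`) to the others' total
investment `xbar` at tax rate `t`. -/
def IsBestResponse (p r : ℝ → ℝ) (α k t xbar b : ℝ) : Prop :=
  b ∈ Icc (0:ℝ) 1 ∧
    ∀ y ∈ Icc (0:ℝ) 1,
      y ^ α * effRate p r α k (y + xbar) t ≤ b ^ α * effRate p r α k (b + xbar) t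

/-- Pure Nash equilibrium of the Fragile CPR game at tax rate `t`. -/
def IsPNE {ι : Type*} [Fintype ι] [DecidableEq ι] (p r : ℝ → ℝ) (α k : ι → ℝ)
    (t : ℝ) (x : ι → ℝ) : Prop :=
  (∀ i, x i ∈ Icc (0:ℝ) 1) ∧
    ∀ i, ∀ y ∈ Icc (0:ℝ) 1,
      y ^ α i * effRate p r (α i) (k i) (y + ∑ j ∈ Finset.univ.erase i, x j) t ≤
        x i ^ α i * effRate p r (α i) (k i) (x i + ∑ j ∈ Finset.univ.erase i, x j) t

/-- `y` is the threshold `y^t_i` of a player, as defined in the paper for the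
increasing and decreasing cases of the rate of return. -/
def IsThresholdY (p r : ℝ → ℝ) (α k t y : ℝ) : Prop :=
  (StrictMonoOn r (Icc (0:ℝ) 1) →
    ((∀ x ∈ St r t, effRate p r α k x t ≤ 0) → y = 0) ∧
    ((∃ x ∈ St r t, 0 < effRate p r α k x t) →
      ∃ z ∈ St r t, IsMaxOn (fun x => effRate p r α k x t) (St r t) z ∧
        y ∈ Ioo z 1 ∧ effRate p r α k y t = 0)) ∧
  (StrictAntiOn r (Icc (0:ℝ) 1) →
    ((effRate p r α k 0 t ≤ 0) → y = 0) ∧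
    ((0 < effRate p r α k 0 t) → y ∈ St r t ∧ effRate p r α k y t = 0))

/-- Pure Nash equilibrium under player-specific tax sensitivities `γ_i`
(all players have `α = 1` and common loss aversion `k`). -/
def IsPNEgamma {ι : Type*} [Fintype ι] [DecidableEq ι] (p r : ℝ → ℝ) (k t : ℝ)
    (γ : ι → ℝ) (x : ι → ℝ) : Prop :=
  (∀ i, x i ∈ Icc (0:ℝ) 1) ∧
    ∀ i, ∀ y ∈ Icc (0:ℝ) 1,
      y * effRate p r 1 k (y + ∑ j ∈ Finset.univ.erase i, x j) (γ i * t) ≤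
        x i * effRate p r 1 k (x i + ∑ j ∈ Finset.univ.erase i, x j) (γ i * t)

/-! ### Concavity and real powers -/

lemma concaveOn_rpow_comp {E : Type*} [AddCommMonoid E] [Module ℝ E] {s : Set E} {g : E → ℝ}
    {α : ℝ} (hg : ConcaveOn ℝ s g) (hg0 : ∀ x ∈ s, 0 ≤ g x) (hα0 : 0 ≤ α) (hα1 : α ≤ 1) :
    ConcaveOn ℝ s (fun x => g x ^ α) := by
  refine ⟨hg.1, fun x hx y hy a b ha hb hab => ?_⟩
  calc a • g x ^ α + b • g y ^ α
      ≤ (a • g x + b • g y) ^ α :=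
        (Real.concaveOn_rpow hα0 hα1).2 (hg0 x hx) (hg0 y hy) ha hb hab
    _ ≤ g (a • x + b • y) ^ α :=
        Real.rpow_le_rpow
          (add_nonneg (smul_nonneg ha (hg0 x hx)) (smul_nonneg hb (hg0 y hy)))
          (hg.2 hx hy ha hb hab) hα0

lemma rpow_sub_one_mul_self {x : ℝ} (hx : x ≠ 0) (α : ℝ) : x ^ (α - 1) * x = x ^ α := by
  rw [Real.rpow_sub_one hx, div_mul_cancel₀ _ hx]

lemma mul_rpow_sub_one_mul_sub_le {α v w : ℝ} (hα0 : 0 ≤ α) (hα1 : α ≤ 1) (hv : 0 ≤ v)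
    (hvw : v < w) : α * w ^ (α - 1) * (w - v) ≤ w ^ α - v ^ α := by
  have hw : 0 < w := hv.trans_lt hvw
  have hslope := (Real.concaveOn_rpow hα0 hα1).le_slope_of_hasDerivAt (x := v) (y := w)
    hv hw.le hvw (Real.hasDerivAt_rpow_const (Or.inl hw.ne'))
  rwa [slope_def_field, le_div_iff₀ (sub_pos.2 hvw)] at hslope

/-! ### The normalized rate of return -/

/-- Return on a unit of investment after tax, relative to the taxed unit `1 + t`. The effective rate
of return is `(1 + t) ^ α` times a function of this ratio, see `effRate_eq_mul_normRate`. -/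
def netReturn (r : ℝ → ℝ) (x t : ℝ) : ℝ := (r x - t) / (1 + t)

/-- Effective rate of return divided by `(1 + t) ^ α`, as a function of the failure probability `P`
and of the net return `w`. -/
def normRate (α k P w : ℝ) : ℝ := w ^ α * (1 - P) - k * P

/-- Derivative in the utilization of the effective rate of return, divided by `(1 + t) ^ α`, as a
function of `ρ = r' / (r + 1)`, the failure probability `P`, its derivative `P'` and the net return
`w`. -/
def normRateDx (α k ρ P P' w : ℝ) : ℝ :=
  α * (w ^ (α - 1) + w ^ α) * ρ * (1 - P) - (w ^ α + k) * P'

section Normalized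

variable {α k ρ P P' v w : ℝ}

/-- The hypothesis `hK` is `k > q` at the net return `v`, cleared of denominators. -/
lemma normRate_mul_normRateDx_lt (hα : α ∈ Ioc (0 : ℝ) 1) (hk : 0 ≤ k) (hρ : 0 ≤ ρ)
    (hP : P ∈ Icc (0 : ℝ) 1) (hv : 0 < v) (hvw : v < w)
    (hK : v ^ (α - 1) * (ρ * (1 - P) ^ 2) < k * (P' - α * ρ * (1 - P) * P)) :
    normRate α k P w * normRateDx α k ρ P P' v < normRate α k P v * normRateDx α k ρ P P' w := by
  have hP1 : 0 ≤ 1 - P := sub_nonneg.2 hP.2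
  have hpow : v ^ α < w ^ α := Real.rpow_lt_rpow hv.le hvw hα.1
  have hpow_sub_one : w ^ (α - 1) ≤ v ^ (α - 1) :=
    Real.rpow_le_rpow_of_nonpos hv hvw.le (sub_nonpos.2 hα.2)
  have hconcave := mul_rpow_sub_one_mul_sub_le hα.1.le hα.2 hv.le hvw
  have hsplit : normRate α k P v * normRateDx α k ρ P P' w
        - normRate α k P w * normRateDx α k ρ P P' v
      = (k * (P' - α * ρ * (1 - P) * P) - v ^ (α - 1) * (ρ * (1 - P) ^ 2)) * (w ^ α - v ^ α)
        + v ^ (α - 1) * (ρ * (1 - P) ^ 2) * (w ^ α - v ^ α - α * w ^ (α - 1) * (w - v))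
        + k * P * α * ρ * (1 - P) * (v ^ (α - 1) - w ^ (α - 1)) := by
    unfold normRate normRateDx
    rw [← rpow_sub_one_mul_self hv.ne' α, ← rpow_sub_one_mul_self (hv.trans hvw).ne' α]
    ring
  have hgap := mul_pos (sub_pos.2 hK) (sub_pos.2 hpow)
  have hconcave_term : 0 ≤ v ^ (α - 1) * (ρ * (1 - P) ^ 2)
      * (w ^ α - v ^ α - α * w ^ (α - 1) * (w - v)) :=
    mul_nonneg (by positivity) (sub_nonneg.2 hconcave)
  have hpow_term : 0 ≤ k * P * α * ρ * (1 - P) * (v ^ (α - 1) - w ^ (α - 1)) := by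
    have := hP.1
    have := hα.1
    exact mul_nonneg (by positivity) (sub_nonneg.2 hpow_sub_one)
  linarith

/-- Eliminating `k` between the two hypotheses leaves `α ρ (1 - P) P ≤ w / (w + 1) * P'`. -/
lemma mul_lt_of_normRateDx_nonpos (hw : 0 < w) (hP : 0 ≤ P) (hP' : 0 < P')
    (hf : 0 ≤ normRate α k P w) (hfx : normRateDx α k ρ P P' w ≤ 0) :
    α * ρ * (1 - P) * P < P' := by
  have ha : 0 < w ^ α := Real.rpow_pos_of_pos hw α
  have hb : 0 < w ^ (α - 1) := Real.rpow_pos_of_pos hw (α - 1)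
  unfold normRate at hf
  unfold normRateDx at hfx
  refine lt_of_mul_lt_mul_right ?_ (add_pos hb ha).le
  calc α * ρ * (1 - P) * P * (w ^ (α - 1) + w ^ α)
      = α * (w ^ (α - 1) + w ^ α) * ρ * (1 - P) * P := by ring
    _ ≤ (w ^ α + k) * P' * P := mul_le_mul_of_nonneg_right (sub_nonpos.1 hfx) hP
    _ = w ^ α * P * P' + k * P * P' := by ring
    _ ≤ w ^ α * P * P' + w ^ α * (1 - P) * P' :=
        add_le_add_right (mul_le_mul_of_nonneg_right (sub_nonneg.1 hf) hP'.le) _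
    _ = P' * w ^ α := by ring
    _ < P' * (w ^ (α - 1) + w ^ α) := by
        gcongr
        exact lt_add_of_pos_left _ hb

lemma mul_normRate_add_mul_normRateDx_neg {c u : ℝ} (hα : α ∈ Ioc (0 : ℝ) 1) (hk : 0 ≤ k)
    (hρ : 0 ≤ ρ) (hP : P ∈ Icc (0 : ℝ) 1) (hu : 0 < u) (huv : u ≤ v) (hvw : v < w) (hc : 0 < c)
    (hf : 0 ≤ normRate α k P w) (hfoc : α * normRate α k P w + c * normRateDx α k ρ P P' w = 0)
    (hK : u ^ (α - 1) * (ρ * (1 - P) ^ 2) < k * (P' - α * ρ * (1 - P) * P)) :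
    α * normRate α k P v + c * normRateDx α k ρ P P' v < 0 := by
  have hKv : v ^ (α - 1) * (ρ * (1 - P) ^ 2) < k * (P' - α * ρ * (1 - P) * P) := by
    refine lt_of_le_of_lt (mul_le_mul_of_nonneg_right ?_ (by positivity)) hK
    exact Real.rpow_le_rpow_of_nonpos hu huv (sub_nonpos.2 hα.2)
  have hcross := normRate_mul_normRateDx_lt hα hk hρ hP (hu.trans_le huv) hvw hKv
  refine neg_of_mul_neg_right (a := normRate α k P w) ?_ hf
  calc normRate α k P w * (α * normRate α k P v + c * normRateDx α k ρ P P' v)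
      = α * normRate α k P w * normRate α k P v
        + c * (normRate α k P w * normRateDx α k ρ P P' v) := by ring
    _ < α * normRate α k P w * normRate α k P v
        + c * (normRate α k P v * normRateDx α k ρ P P' w) := by gcongr
    _ = (α * normRate α k P w + c * normRateDx α k ρ P P' w) * normRate α k P v := by ring
    _ = 0 := by rw [hfoc, zero_mul]

end Normalized

/-! ### The failure probability and the rate of return -/

namespace FailureProb

variable {p : ℝ → ℝ} {x : ℝ}

lemma lt_one (hp : FailureProb p) (hx : x ∈ Ico (0 : ℝ) 1) : p x < 1 := by
  obtain ⟨y, hxy, hy⟩ := exists_between hx.2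
  exact (hp.strictMonoOn hx ⟨hx.1.trans hxy.le, hy⟩ hxy).trans_le (hp.mem_unit y).2

lemma differentiableAt (hp : FailureProb p) (hx : x ∈ Ioo (0 : ℝ) 1) : DifferentiableAt ℝ p x :=
  (hp.contDiffOn.differentiableOn one_ne_zero x (Ioo_subset_Ico_self hx)).differentiableAt
    (Ico_mem_nhds hx.1 hx.2)

lemma deriv_pos (hp : FailureProb p) (hx : x ∈ Ioo (0 : ℝ) 1) : 0 < deriv p x := by
  have h0 : (0 : ℝ) ∈ Ico (0 : ℝ) 1 := ⟨le_rfl, one_pos⟩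
  have hx' := Ioo_subset_Ico_self hx
  calc 0 < slope p 0 x := (slope_pos_iff hx.1).2 (hp.strictMonoOn h0 hx' hx.1)
    _ ≤ deriv p x := hp.convexOn.slope_le_deriv h0 hx' hx.1 (hp.differentiableAt hx)

end FailureProb

lemma RateOfReturn.differentiableAt {r : ℝ → ℝ} {x : ℝ} (hr : RateOfReturn r)
    (hx : x ∈ Ioo (0 : ℝ) 1) : DifferentiableAt ℝ r x :=
  (hr.contDiffOn.differentiableOn one_ne_zero x (Ioo_subset_Icc_self hx)).differentiableAt
    (Icc_mem_nhds hx.1 hx.2)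

lemma deriv_nonneg_of_strictMonoOn {r : ℝ → ℝ} {s : Set ℝ} {x : ℝ} (hr : StrictMonoOn r s)
    (hs : s ∈ nhds x) : 0 ≤ deriv r x := by
  rw [← derivWithin_of_mem_nhds hs]
  exact hr.monotoneOn.derivWithin_nonneg

lemma aT_nonneg (r : ℝ → ℝ) (t : ℝ) : 0 ≤ aT r t := by
  unfold aT
  split_ifs
  exacts [le_rfl, Real.sInf_nonneg fun x hx => hx.1.1]

/-- The level `t` has to be reached by `r`: otherwise `aT` is the infimum of the empty set, `0`. -/
lemma lt_rate_of_aT_lt {r : ℝ → ℝ} {t x y : ℝ} (hr : ContinuousOn r (Icc (0 : ℝ) 1))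
    (hinc : StrictMonoOn r (Icc (0 : ℝ) 1)) (hx : x ∈ Icc (0 : ℝ) 1) (hy : y ∈ Icc (0 : ℝ) 1)
    (hty : t ≤ r y) (ha : aT r t < x) : t < r x := by
  unfold aT at ha
  split_ifs at ha with h0
  · exact h0.trans_lt (hinc (left_mem_Icc.2 zero_le_one) hx ha)
  · obtain ⟨a, ha0, hat⟩ := intermediate_value_Icc hy.1 (hr.mono (Icc_subset_Icc_right hy.2))
      ⟨(not_le.1 h0).le, hty⟩
    obtain ⟨z, ⟨hz, rfl⟩, hzx⟩ := exists_lt_of_csInf_lt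
      (s := {x | x ∈ Icc (0 : ℝ) 1 ∧ r x = t}) ⟨a, ⟨ha0.1, ha0.2.trans hy.2⟩, hat⟩ ha
    exact hinc hz hx hzx

/-! ### The effective rate of return -/

/-- Interior utilizations at which the rate of return exceeds the tax rate. On this region the
effective rate of return is differentiable and concave in the utilization. -/
def profitRegion (r : ℝ → ℝ) (t : ℝ) : Set ℝ := {x ∈ Ioo (0 : ℝ) 1 | t < r x}

/-- The derivative of the payoff `y ↦ y ^ α * f (y + x̄)` at the investment `y = c`, divided by
`c ^ (α - 1)`; here `x = c + x̄` is the utilization. -/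
def marginalPayoff (p r : ℝ → ℝ) (α k c x t : ℝ) : ℝ :=
  α * effRate p r α k x t + c * effRateDx p r α k x t

section EffectiveRate

variable {p r : ℝ → ℝ} {α k c d t t₁ t₂ x y : ℝ}

lemma profitRegion_anti (r : ℝ → ℝ) : Antitone (profitRegion r) :=
  fun _ _ ht _ hx => ⟨hx.1, ht.trans_lt hx.2⟩

lemma mem_profitRegion_of_le (hinc : StrictMonoOn r (Icc (0 : ℝ) 1)) (hx : x ∈ profitRegion r t)
    (hxy : x ≤ y) (hy : y < 1) : y ∈ profitRegion r t :=
  have hy' : y ∈ Ioo (0 : ℝ) 1 := ⟨hx.1.1.trans_le hxy, hy⟩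
  ⟨hy', hx.2.trans_le
    (hinc.monotoneOn (Ioo_subset_Icc_self hx.1) (Ioo_subset_Icc_self hy') hxy)⟩

lemma effRate_of_le (h : t ≤ r x) :
    effRate p r α k x t = (r x - t) ^ α * (1 - p x) - k * (1 + t) ^ α * p x :=
  if_pos (sub_nonneg.2 h)

lemma effRate_neg_of_rate_lt (hp : FailureProb p) (hk : 0 < k) (ht : 0 ≤ t) (h : r x < t) :
    effRate p r α k x t < 0 := by
  have hloss : 0 < (t - r x) ^ α := Real.rpow_pos_of_pos (sub_pos.2 h) α
  have hstake : 0 < (1 + t) ^ α := Real.rpow_pos_of_pos (by linarith) α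
  have hmix : 0 < (1 - p x) * (t - r x) ^ α + p x * (1 + t) ^ α :=
    convex_Ioi (0 : ℝ) hloss hstake (sub_nonneg.2 (hp.mem_unit x).2) (hp.mem_unit x).1 (by ring)
  rw [effRate, if_neg (by linarith)]
  exact neg_neg_of_pos (mul_pos hk (by linarith))

lemma effRate_neg_of_one_le (hp : FailureProb p) (hk : 0 < k) (ht : 0 ≤ t) (hx : 1 ≤ x) :
    effRate p r α k x t < 0 := by
  rcases lt_or_ge (r x) t with h | h
  · exact effRate_neg_of_rate_lt hp hk ht h
  · have hstake : 0 < k * (1 + t) ^ α := mul_pos hk (Real.rpow_pos_of_pos (by linarith) α)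
    rw [effRate_of_le h, hp.eq_one x hx]
    linarith

lemma strictAntiOn_effRate_tax (hp : FailureProb p) (hα : 0 < α) (hk : 0 ≤ k)
    (hx : x ∈ Ico (0 : ℝ) 1) : StrictAntiOn (effRate p r α k x) (Icc 0 (r x)) := by
  intro s hs t ht hst
  rw [effRate_of_le hs.2, effRate_of_le ht.2]
  have hgain : (r x - t) ^ α * (1 - p x) < (r x - s) ^ α * (1 - p x) :=
    mul_lt_mul_of_pos_right
      (Real.rpow_lt_rpow (sub_nonneg.2 ht.2) (sub_lt_sub_left hst _) hα) (sub_pos.2 (hp.lt_one hx))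
  have hloss : k * (1 + s) ^ α * p x ≤ k * (1 + t) ^ α * p x := by
    have := (hp.mem_unit x).1
    have := hs.1
    gcongr
  linarith

lemma continuousOn_effRate_tax (hα : 0 ≤ α) : ContinuousOn (effRate p r α k x) (Iic (r x)) := by
  have hgain : Continuous fun t : ℝ => (r x - t) ^ α :=
    (continuous_const.sub continuous_id).rpow_const fun _ => Or.inr hα
  have hstake : Continuous fun t : ℝ => (1 + t) ^ α :=
    (continuous_const.add continuous_id).rpow_const fun _ => Or.inr hα
  have hcont : Continuous fun t => (r x - t) ^ α * (1 - p x) - k * (1 + t) ^ α * p x :=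
    (hgain.mul_const _).sub ((hstake.const_mul k).mul_const _)
  exact hcont.continuousOn.congr fun t ht => effRate_of_le ht

lemma hasDerivAt_effRate (hp : FailureProb p) (hr : RateOfReturn r) (hx : x ∈ profitRegion r t) :
    HasDerivAt (fun z => effRate p r α k z t)
      (α * (r x - t) ^ (α - 1) * deriv r x * (1 - p x)
        - ((r x - t) ^ α + k * (1 + t) ^ α) * deriv p x) x := by
  have hrx := (hr.differentiableAt hx.1).hasDerivAt
  have hpx := (hp.differentiableAt hx.1).hasDerivAt
  have hgain := (hrx.sub_const t).rpow_const (p := α) (Or.inl (sub_pos.2 hx.2).ne')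
  have hformula := (hgain.mul (hpx.const_sub 1)).sub (hpx.const_mul (k * (1 + t) ^ α))
  refine (hformula.congr_deriv (by ring)).congr_of_eventuallyEq ?_
  filter_upwards [hrx.continuousAt.eventually (lt_mem_nhds hx.2)] with z hz
  exact effRate_of_le hz.le

lemma differentiableAt_effRate (hp : FailureProb p) (hr : RateOfReturn r)
    (hx : x ∈ profitRegion r t) : DifferentiableAt ℝ (fun z => effRate p r α k z t) x :=
  (hasDerivAt_effRate hp hr hx).differentiableAt

lemma concaveOn_effRate (hp : FailureProb p) (hr : RateOfReturn r)
    (hinc : StrictMonoOn r (Icc (0 : ℝ) 1)) (hα : α ∈ Ioc (0 : ℝ) 1) (hk : 0 ≤ k) (ht : 0 ≤ t) :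
    ConcaveOn ℝ (profitRegion r t) (fun x => effRate p r α k x t) := by
  have hIco : profitRegion r t ⊆ Ico 0 1 := fun x hx => Ioo_subset_Ico_self hx.1
  have hIcc : profitRegion r t ⊆ Icc 0 1 := fun x hx => Ioo_subset_Icc_self hx.1
  have hconvex : Convex ℝ (profitRegion r t) :=
    (hr.concaveOn.subset Ioo_subset_Icc_self (convex_Ioo 0 1)).convex_gt t
  have hnet : ∀ x ∈ profitRegion r t, 0 ≤ r x - t := fun x hx => (sub_pos.2 hx.2).le
  have hgain : ConcaveOn ℝ (profitRegion r t) (fun x => (r x - t) ^ α) :=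
    concaveOn_rpow_comp ((hr.concaveOn.subset hIcc hconvex).add_const (-t)) hnet hα.1.le hα.2
  have hp_convex : ConvexOn ℝ (profitRegion r t) p := hp.convexOn.subset hIco hconvex
  have hsuccess : ConcaveOn ℝ (profitRegion r t) (fun x => 1 - p x) :=
    (concaveOn_const 1 hconvex).sub hp_convex
  have hgain_mono : MonotoneOn (fun x => (r x - t) ^ α) (profitRegion r t) := fun x hx y hy hxy =>
    Real.rpow_le_rpow (hnet x hx)
      (sub_le_sub_right (hinc.monotoneOn (hIcc hx) (hIcc hy) hxy) t) hα.1.le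
  have hsuccess_anti : AntitoneOn (fun x => 1 - p x) (profitRegion r t) := fun x hx y hy hxy =>
    sub_le_sub_left (hp.strictMonoOn.monotoneOn (hIco hx) (hIco hy) hxy) 1
  have hexpected_gain := hgain.mul hsuccess (fun x hx => Real.rpow_nonneg (hnet x hx) α)
    (fun x _ => sub_nonneg.2 (hp.mem_unit x).2) (hgain_mono.antivaryOn hsuccess_anti)
  have hstake : 0 ≤ k * (1 + t) ^ α := by positivity
  exact (hexpected_gain.sub (hp_convex.smul hstake)).congr fun x hx => (effRate_of_le hx.2.le).symm

lemma effRate_le_of_effRateDx_nonpos (hp : FailureProb p) (hr : RateOfReturn r)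
    (hinc : StrictMonoOn r (Icc (0 : ℝ) 1)) (hα : α ∈ Ioc (0 : ℝ) 1) (hk : 0 ≤ k) (ht : 0 ≤ t)
    (hx : x ∈ profitRegion r t) (hy : y ∈ profitRegion r t) (hxy : x < y)
    (hfx : effRateDx p r α k x t ≤ 0) : effRate p r α k y t ≤ effRate p r α k x t :=
  (slope_nonpos_iff_of_le hxy.le).1 <|
    ((concaveOn_effRate hp hr hinc hα hk ht).slope_le_deriv hx hy hxy
      (differentiableAt_effRate hp hr hx)).trans hfx

lemma marginalPayoff_le_of_effRateDx_nonpos (hp : FailureProb p) (hr : RateOfReturn r)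
    (hinc : StrictMonoOn r (Icc (0 : ℝ) 1)) (hα : α ∈ Ioc (0 : ℝ) 1) (hk : 0 ≤ k) (ht : 0 ≤ t)
    (hx : x ∈ profitRegion r t) (hy : y ∈ profitRegion r t) (hxy : x < y)
    (hfx : effRateDx p r α k x t ≤ 0) (hc : 0 ≤ c) (hcd : c ≤ d) :
    marginalPayoff p r α k d y t ≤ marginalPayoff p r α k c x t := by
  have hDx_anti : effRateDx p r α k y t ≤ effRateDx p r α k x t :=
    (concaveOn_effRate hp hr hinc hα hk ht).antitoneOn_deriv
      (fun z hz => differentiableAt_effRate hp hr hz) hx hy hxy.le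
  refine add_le_add (mul_le_mul_of_nonneg_left
    (effRate_le_of_effRateDx_nonpos hp hr hinc hα hk ht hx hy hxy hfx) hα.1.le) ?_
  calc d * effRateDx p r α k y t
      ≤ c * effRateDx p r α k y t := mul_le_mul_of_nonpos_right hcd (hDx_anti.trans hfx)
    _ ≤ c * effRateDx p r α k x t := mul_le_mul_of_nonneg_left hDx_anti hc

lemma effRateDx_nonpos_of_marginalPayoff_nonpos (hα : 0 ≤ α) (hc : 0 < c)
    (hf : 0 ≤ effRate p r α k x t) (hm : marginalPayoff p r α k c x t ≤ 0) :
    effRateDx p r α k x t ≤ 0 := by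
  have hαf : 0 ≤ α * effRate p r α k x t := mul_nonneg hα hf
  unfold marginalPayoff at hm
  exact nonpos_of_mul_nonpos_right (by linarith) hc

/-! ### Raising the tax at a fixed utilization -/

lemma netReturn_pos (ht : 0 ≤ t) (h : t < r x) : 0 < netReturn r x t :=
  div_pos (sub_pos.2 h) (by linarith)

lemma strictAntiOn_netReturn (hr : 0 < r x) : StrictAntiOn (netReturn r x) (Ici 0) := by
  intro s (hs : 0 ≤ s) t _ hst
  unfold netReturn
  rw [div_lt_div_iff₀ (by linarith) (by linarith)]
  nlinarith

lemma effRate_eq_mul_normRate (ht : 0 ≤ t) (h : t ≤ r x) :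
    effRate p r α k x t = (1 + t) ^ α * normRate α k (p x) (netReturn r x t) := by
  have ht1 : 0 < 1 + t := by linarith
  have hne := (Real.rpow_pos_of_pos ht1 α).ne'
  rw [effRate_of_le h, normRate, netReturn, Real.div_rpow (sub_nonneg.2 h) ht1.le]
  field_simp

lemma effRateDx_eq_mul_normRateDx (hp : FailureProb p) (hr : RateOfReturn r) (ht : 0 ≤ t)
    (hx : x ∈ profitRegion r t) :
    effRateDx p r α k x t = (1 + t) ^ α *
      normRateDx α k (deriv r x / (r x + 1)) (p x) (deriv p x) (netReturn r x t) := by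
  have ht1 : 0 < 1 + t := by linarith
  have hnet : 0 < r x - t := sub_pos.2 hx.2
  have hr1 : r x + 1 ≠ 0 := by linarith
  have hne := (Real.rpow_pos_of_pos ht1 α).ne'
  rw [effRateDx, (hasDerivAt_effRate hp hr hx).deriv, normRateDx, netReturn,
    Real.div_rpow hnet.le ht1.le, Real.div_rpow hnet.le ht1.le, Real.rpow_sub_one ht1.ne',
    Real.rpow_sub_one hnet.ne']
  field_simp
  ring

lemma qFun_lt_iff (ht : 0 ≤ t) (h : t < r x)
    (hden : α * (deriv r x / (r x + 1)) * (1 - p x) * p x < deriv p x) :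
    qFun p r α x t < k ↔
      netReturn r x t ^ (α - 1) * (deriv r x / (r x + 1) * (1 - p x) ^ 2)
        < k * (deriv p x - α * (deriv r x / (r x + 1)) * (1 - p x) * p x) := by
  have hr1 : 0 < r x + 1 := by linarith
  have hpow : ((1 + t) / (r x - t)) ^ (1 - α) = netReturn r x t ^ (α - 1) := by
    rw [netReturn, ← inv_div, ← Real.rpow_neg_eq_inv_rpow, neg_sub]
  have hden_eq : (r x + 1) * deriv p x - α * deriv r x * (1 - p x) * p x
      = (r x + 1) * (deriv p x - α * (deriv r x / (r x + 1)) * (1 - p x) * p x) := by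
    field_simp
  rw [← div_lt_iff₀ (sub_pos.2 hden), qFun, hpow, hden_eq, ← div_div]
  ring_nf

lemma marginalPayoff_eq_mul (hp : FailureProb p) (hr : RateOfReturn r) (ht : 0 ≤ t)
    (hx : x ∈ profitRegion r t) :
    marginalPayoff p r α k c x t = (1 + t) ^ α * (α * normRate α k (p x) (netReturn r x t)
      + c * normRateDx α k (deriv r x / (r x + 1)) (p x) (deriv p x) (netReturn r x t)) := by
  rw [marginalPayoff, effRate_eq_mul_normRate ht hx.2.le, effRateDx_eq_mul_normRateDx hp hr ht hx]
  ring

/-- The equilibrium conditions make the denominator of `qFun` positive, which is what gives content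
to `k > q`. -/
lemma mul_lt_deriv_of_effRateDx_nonpos (hp : FailureProb p) (hr : RateOfReturn r) (ht : 0 ≤ t)
    (hx : x ∈ profitRegion r t) (hf : 0 ≤ effRate p r α k x t)
    (hfx : effRateDx p r α k x t ≤ 0) :
    α * (deriv r x / (r x + 1)) * (1 - p x) * p x < deriv p x := by
  have hstake : 0 < (1 + t) ^ α := Real.rpow_pos_of_pos (by linarith) α
  rw [effRate_eq_mul_normRate ht hx.2.le] at hf
  rw [effRateDx_eq_mul_normRateDx hp hr ht hx] at hfx
  exact mul_lt_of_normRateDx_nonpos (netReturn_pos ht hx.2) (hp.mem_unit x).1 (hp.deriv_pos hx.1)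
    (nonneg_of_mul_nonneg_right hf hstake) (nonpos_of_mul_nonpos_right hfx hstake)

lemma marginalPayoff_neg_of_tax_lt (hp : FailureProb p) (hr : RateOfReturn r)
    (hinc : StrictMonoOn r (Icc (0 : ℝ) 1)) (hα : α ∈ Ioc (0 : ℝ) 1) (hk : 0 ≤ k) (ht₂ : 0 ≤ t₂)
    (ht₂t : t₂ < t) (htt₁ : t ≤ t₁) (hx : x ∈ profitRegion r t₁) (hc : 0 < c)
    (hf : 0 ≤ effRate p r α k x t₂) (hfoc : marginalPayoff p r α k c x t₂ = 0)
    (hq : qFun p r α x t₁ < k) : marginalPayoff p r α k c x t < 0 := by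
  have ht : 0 ≤ t := ht₂.trans ht₂t.le
  have ht₁ : 0 ≤ t₁ := ht.trans htt₁
  have hxt : x ∈ profitRegion r t := profitRegion_anti r htt₁ hx
  have hxt₂ : x ∈ profitRegion r t₂ := profitRegion_anti r ht₂t.le hxt
  have hrx : 0 < r x := ht₁.trans_lt hx.2
  have hr' : 0 ≤ deriv r x := deriv_nonneg_of_strictMonoOn hinc (Icc_mem_nhds hx.1.1 hx.1.2)
  have hfx := effRateDx_nonpos_of_marginalPayoff_nonpos hα.1.le hc hf hfoc.le
  have hK := (qFun_lt_iff ht₁ hx.2 (mul_lt_deriv_of_effRateDx_nonpos hp hr ht₂ hxt₂ hf hfx)).1 hq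
  have hnet := strictAntiOn_netReturn hrx
  have hstake₂ : 0 < (1 + t₂) ^ α := Real.rpow_pos_of_pos (by linarith) α
  rw [effRate_eq_mul_normRate ht₂ hxt₂.2.le] at hf
  rw [marginalPayoff_eq_mul hp hr ht₂ hxt₂] at hfoc
  rw [marginalPayoff_eq_mul hp hr ht hxt]
  exact mul_neg_of_pos_of_neg (Real.rpow_pos_of_pos (by linarith) α) <|
    mul_normRate_add_mul_normRateDx_neg hα hk (by positivity) (hp.mem_unit x)
      (netReturn_pos ht₁ hx.2) (hnet.antitoneOn ht ht₁ htt₁) (hnet ht₂ ht ht₂t) hc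
      (nonneg_of_mul_nonneg_right hf hstake₂)
      ((mul_eq_zero.1 hfoc).resolve_left hstake₂.ne') hK

/-- The rate of return at `x` cannot cross zero between `t₂` and `t₁`: at a zero it would be
nonincreasing in the utilization, and raising the tax further would make it negative at `y` too. -/
lemma effRate_nonneg_of_marginalPayoff_nonpos (hp : FailureProb p) (hr : RateOfReturn r)
    (hinc : StrictMonoOn r (Icc (0 : ℝ) 1)) (hα : α ∈ Ioc (0 : ℝ) 1) (hk : 0 ≤ k) (ht₂ : 0 ≤ t₂)
    (ht : t₂ ≤ t₁) (hc : 0 < c) (hx : x ∈ profitRegion r t₁) (hy : y ∈ profitRegion r t₁)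
    (hxy : x < y) (hm : ∀ t ∈ Icc t₂ t₁, marginalPayoff p r α k c x t ≤ 0)
    (hfx : 0 ≤ effRate p r α k x t₂) (hfy : 0 ≤ effRate p r α k y t₁) :
    0 ≤ effRate p r α k x t₁ := by
  by_contra! hneg
  obtain ⟨s, hs, hzero⟩ := intermediate_value_Icc' ht
    ((continuousOn_effRate_tax (p := p) (k := k) hα.1.le).mono fun _ hs => hs.2.trans hx.2.le)
    ⟨hneg.le, hfx⟩
  have hs0 : 0 ≤ s := ht₂.trans hs.1
  have hst : s < t₁ := hs.2.lt_of_ne (by rintro rfl; exact hneg.ne hzero)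
  have hslope := effRateDx_nonpos_of_marginalPayoff_nonpos hα.1.le hc hzero.ge (hm s hs)
  have hys : effRate p r α k y s ≤ 0 := hzero ▸ effRate_le_of_effRateDx_nonpos hp hr hinc hα hk hs0
    (profitRegion_anti r hs.2 hx) (profitRegion_anti r hs.2 hy) hxy hslope
  have hdrop := strictAntiOn_effRate_tax (k := k) hp hα.1 hk (Ioo_subset_Ico_self hy.1)
    ⟨hs0, hst.le.trans hy.2.le⟩ ⟨hs0.trans hst.le, hy.2.le⟩ hst
  linarith

/-- The equilibrium investments are `c` at tax `t₂`, where the utilization is `x`, and `d` at tax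
`t₁`, where it is `y`. -/
lemma investment_le_of_qFun_lt (hp : FailureProb p) (hr : RateOfReturn r)
    (hinc : StrictMonoOn r (Icc (0 : ℝ) 1)) (hα : α ∈ Ioc (0 : ℝ) 1) (hk : 0 ≤ k) (ht₂ : 0 ≤ t₂)
    (ht : t₂ < t₁) (hc : 0 < c) (hx : x ∈ profitRegion r t₁) (hy : y ∈ profitRegion r t₁)
    (hxy : x < y) (hfx : 0 ≤ effRate p r α k x t₂) (hfy : 0 ≤ effRate p r α k y t₁)
    (hfoc₂ : marginalPayoff p r α k c x t₂ = 0) (hfoc₁ : marginalPayoff p r α k d y t₁ = 0)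
    (hq : qFun p r α x t₁ < k) : d ≤ c := by
  have hneg : ∀ t, t₂ < t → t ≤ t₁ → marginalPayoff p r α k c x t < 0 := fun t h₂ h₁ =>
    marginalPayoff_neg_of_tax_lt hp hr hinc hα hk ht₂ h₂ h₁ hx hc hfx hfoc₂ hq
  have hm : ∀ t ∈ Icc t₂ t₁, marginalPayoff p r α k c x t ≤ 0 := fun t h =>
    h.1.eq_or_lt.elim (fun h₂ => h₂ ▸ hfoc₂.le) fun h₂ => (hneg t h₂ h.2).le
  have hm₁ := hneg t₁ ht le_rfl
  have hf := effRate_nonneg_of_marginalPayoff_nonpos hp hr hinc hα hk ht₂ ht.le hc hx hy hxy hm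
    hfx hfy
  have hslope := effRateDx_nonpos_of_marginalPayoff_nonpos hα.1.le hc hf hm₁.le
  by_contra! hcd
  refine (hfoc₁ ▸ hm₁).not_ge ?_
  exact marginalPayoff_le_of_effRateDx_nonpos hp hr hinc hα hk (ht₂.trans ht.le) hx hy hxy hslope
    hc.le hcd.le

end EffectiveRate

/-! ### Equilibria -/

lemma hasDerivAt_payoff {p r : ℝ → ℝ} {α k b t y : ℝ} (hp : FailureProb p) (hr : RateOfReturn r)
    (hy : 0 < y) (hx : y + b ∈ profitRegion r t) :
    HasDerivAt (fun z => z ^ α * effRate p r α k (z + b) t)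
      (y ^ (α - 1) * marginalPayoff p r α k y (y + b) t) y := by
  have hrate : HasDerivAt (fun z => effRate p r α k z t) (effRateDx p r α k (y + b) t) (y + b) :=
    (differentiableAt_effRate hp hr hx).hasDerivAt
  refine ((Real.hasDerivAt_rpow_const (Or.inl hy.ne')).mul
    (hrate.comp_add_const y b)).congr_deriv ?_
  rw [marginalPayoff, ← rpow_sub_one_mul_self hy.ne' α]
  ring

namespace IsPNE

variable {ι : Type*} [Fintype ι] [DecidableEq ι] {p r : ℝ → ℝ} {α k : ι → ℝ} {t : ℝ} {x : ι → ℝ}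
  {i : ι}

lemma le_total (hx : IsPNE p r α k t x) (i : ι) : x i ≤ ∑ j, x j :=
  Finset.single_le_sum (fun j _ => (hx.1 j).1) (Finset.mem_univ i)

lemma payoff_le (hx : IsPNE p r α k t x) {y : ℝ} (hy : y ∈ Icc (0 : ℝ) 1) :
    y ^ α i * effRate p r (α i) (k i) (y + (∑ j, x j - x i)) t
      ≤ x i ^ α i * effRate p r (α i) (k i) (∑ j, x j) t := by
  have hdev := hx.2 i y hy
  rwa [Finset.sum_erase_eq_sub (Finset.mem_univ i), add_sub_cancel] at hdev

lemma effRate_nonneg (hx : IsPNE p r α k t x) (hα : α i ≠ 0) (hi : 0 < x i) :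
    0 ≤ effRate p r (α i) (k i) (∑ j, x j) t := by
  have hdev := hx.payoff_le (i := i) (y := 0) ⟨le_rfl, zero_le_one⟩
  rw [Real.zero_rpow hα, zero_mul] at hdev
  exact nonneg_of_mul_nonneg_right hdev (Real.rpow_pos_of_pos hi (α i))

lemma tax_le_rate (hx : IsPNE p r α k t x) (hp : FailureProb p) (hα : α i ≠ 0) (hk : 0 < k i)
    (ht : 0 ≤ t) (hi : 0 < x i) : t ≤ r (∑ j, x j) :=
  not_lt.1 fun h => (effRate_neg_of_rate_lt hp hk ht h).not_ge (hx.effRate_nonneg hα hi)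

lemma total_lt_one (hx : IsPNE p r α k t x) (hp : FailureProb p) (hα : ∀ i, α i ≠ 0)
    (hk : ∀ i, 0 < k i) (ht : 0 ≤ t) : ∑ j, x j < 1 := by
  by_contra! h
  obtain ⟨i, -, hi⟩ := Finset.exists_lt_of_sum_lt
    (s := Finset.univ) (f := fun _ => (0 : ℝ)) (g := x) (by simpa using one_pos.trans_le h)
  exact (effRate_neg_of_one_le hp (hk i) ht h).not_ge (hx.effRate_nonneg (hα i) hi)

lemma marginalPayoff_eq_zero (hx : IsPNE p r α k t x) (hp : FailureProb p) (hr : RateOfReturn r)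
    (hi : 0 < x i) (hX : ∑ j, x j ∈ profitRegion r t) :
    marginalPayoff p r (α i) (k i) (x i) (∑ j, x j) t = 0 := by
  have hmax : IsLocalMax
      (fun z => z ^ α i * effRate p r (α i) (k i) (z + (∑ j, x j - x i)) t) (x i) := by
    filter_upwards [Icc_mem_nhds hi ((hx.le_total i).trans_lt hX.1.2)] with z hz
    simpa only [add_sub_cancel] using hx.payoff_le hz
  have hderiv := hasDerivAt_payoff (α := α i) (k := k i) (b := ∑ j, x j - x i) hp hr hi
    (by rwa [add_sub_cancel])
  rw [add_sub_cancel] at hderiv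
  exact (mul_eq_zero.1 (hmax.hasDerivAt_eq_zero hderiv)).resolve_left
    (Real.rpow_pos_of_pos hi _).ne'

lemma effRate_nonpos (hx : IsPNE p r α k t x) (hα : α i ≠ 0) (hi : x i = 0) {z : ℝ}
    (hz : ∑ j, x j < z) (hz1 : z ≤ 1) : effRate p r (α i) (k i) z t ≤ 0 := by
  have hX : 0 ≤ ∑ j, x j := hi ▸ hx.le_total i
  have hdev := hx.payoff_le (i := i) (y := z - ∑ j, x j) ⟨by linarith, by linarith⟩
  rw [hi, sub_zero, sub_add_cancel, Real.zero_rpow hα, zero_mul] at hdev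
  exact nonpos_of_mul_nonpos_right hdev (Real.rpow_pos_of_pos (sub_pos.2 hz) _)

lemma investment_le_of_total_lt {t₁ t₂ : ℝ} {x₁ x₂ : ι → ℝ} (hx₁ : IsPNE p r α k t₁ x₁)
    (hx₂ : IsPNE p r α k t₂ x₂) (hp : FailureProb p) (hr : RateOfReturn r)
    (hinc : StrictMonoOn r (Icc (0 : ℝ) 1)) (hα : α i ∈ Ioc (0 : ℝ) 1) (hk : 0 ≤ k i)
    (ht₂ : 0 ≤ t₂) (ht : t₂ < t₁) (hX₂ : ∑ j, x₂ j ∈ profitRegion r t₁)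
    (hX₁ : ∑ j, x₁ j < 1) (hX : ∑ j, x₂ j < ∑ j, x₁ j)
    (hq : qFun p r (α i) (∑ j, x₂ j) t₁ < k i) : x₁ i ≤ x₂ i := by
  have hX₁mem := mem_profitRegion_of_le hinc hX₂ hX.le hX₁
  rcases (hx₁.1 i).1.eq_or_lt with h₁ | h₁
  · exact h₁ ▸ (hx₂.1 i).1
  have hf₁ := hx₁.effRate_nonneg hα.1.ne' h₁
  rcases (hx₂.1 i).1.eq_or_lt with h₂ | h₂
  · have hf₁_at_t₂ := hx₂.effRate_nonpos hα.1.ne' h₂.symm hX hX₁.le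
    have hdrop := strictAntiOn_effRate_tax (k := k i) hp hα.1 hk (Ioo_subset_Ico_self hX₁mem.1)
      ⟨ht₂, ht.le.trans hX₁mem.2.le⟩ ⟨ht₂.trans ht.le, hX₁mem.2.le⟩ ht
    linarith
  · exact investment_le_of_qFun_lt hp hr hinc hα hk ht₂ ht h₂ hX₂ hX₁mem hX
      (hx₂.effRate_nonneg hα.1.ne' h₂) hf₁
      (hx₂.marginalPayoff_eq_zero hp hr h₂ (profitRegion_anti r ht.le hX₂))
      (hx₁.marginalPayoff_eq_zero hp hr h₁ hX₁mem) hq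

end IsPNE

theorem statement9_general {ι : Type*} [Fintype ι] [DecidableEq ι]
    (p r : ℝ → ℝ) (α k : ι → ℝ)
    (hp : FailureProb p) (hr : RateOfReturn r)
    (hinc : StrictMonoOn r (Icc (0 : ℝ) 1))
    (hα : ∀ i, α i ∈ Ioc (0 : ℝ) 1) (hk : ∀ i, 0 < k i)
    (t₁ t₂ : ℝ) (ht₂ : 0 ≤ t₂) (ht : t₂ < t₁)
    (x₁ x₂ : ι → ℝ)
    (hx₁ : IsPNE p r α k t₁ x₁) (hx₂ : IsPNE p r α k t₂ x₂)
    (ha : aT r t₁ < ∑ i, x₂ i)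
    (hq : ∀ i, qFun p r (α i) (∑ j, x₂ j) t₁ < k i) :
    ∑ i, x₁ i ≤ ∑ i, x₂ i := by
  have hα0 : ∀ i, α i ≠ 0 := fun i => (hα i).1.ne'
  have ht₁ : 0 ≤ t₁ := ht₂.trans ht.le
  by_contra! hX
  have hX₁ : ∑ i, x₁ i < 1 := hx₁.total_lt_one hp hα0 hk ht₁
  have hX₂ : ∑ i, x₂ i ∈ Ioo (0 : ℝ) 1 := ⟨(aT_nonneg r t₁).trans_lt ha, hX.trans hX₁⟩
  obtain ⟨i, -, hi⟩ := Finset.exists_lt_of_sum_lt hX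
  have hrate₁ : t₁ ≤ r (∑ j, x₁ j) :=
    hx₁.tax_le_rate hp (hα0 i) (hk i) ht₁ ((hx₂.1 i).1.trans_lt hi)
  have hrate₂ : t₁ < r (∑ j, x₂ j) := lt_rate_of_aT_lt hr.contDiffOn.continuousOn hinc
    (Ioo_subset_Icc_self hX₂) ⟨(hX₂.1.trans hX).le, hX₁.le⟩ hrate₁ ha
  exact hi.not_ge (hx₁.investment_le_of_total_lt hx₂ hp hr hinc (hα i) (hk i).le ht₂ ht
    ⟨hX₂, hrate₂⟩ hX₁ hX (hq i))

/-- for a strictly increasing rate of return, if `t_2 < t_1 < t̄`,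
the utilization at the PNE for `t_2` exceeds `a_{t_1}`, and every player's loss
aversion index satisfies `k_i > q_i(x^{t_2}_NE, t_1)`, then the PNE utilizations
satisfy `x^{t_1}_NE ≤ x^{t_2}_NE`. -/
theorem statement9 {ι : Type*} [Fintype ι] [DecidableEq ι] [Nonempty ι]
    (p r : ℝ → ℝ) (α k : ι → ℝ)
    (hp : FailureProb p) (hr : RateOfReturn r)
    (hinc : StrictMonoOn r (Icc (0:ℝ) 1))
    (hα : ∀ i, α i ∈ Ioc (0:ℝ) 1) (hk : ∀ i, 0 < k i)
    (t1 t2 : ℝ) (ht2 : 0 ≤ t2) (h21 : t2 < t1) (h1 : t1 < tbar p r α k)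
    (x1 x2 : ι → ℝ)
    (hx1 : IsPNE p r α k t1 x1) (hx2 : IsPNE p r α k t2 x2)
    (ha : aT r t1 < ∑ i, x2 i)
    (hq : ∀ i, qFun p r (α i) (∑ j, x2 j) t1 < k i) :
    ∑ i, x1 i ≤ ∑ i, x2 i :=
  statement9_general p r α k hp hr hinc hα hk t1 t2 ht2 h21 x1 x2 hx1 hx2 ha hq
end
end

section
/- Consider a Fragile CPR game with strictly increasing rate of return r in which every player has α_i = 1 and k_i ≥ 1. Then for any tax rates t_2 < t_1 < t̄, the PNE utilizations satisfy x^{t_1}_NE ≤ x^{t_2}_NE; that is, utilization is monotonically non-increasing in the tax rate. -/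
/-!
The proof is a discrete revealed-preference argument. Suppose that the total investments satisfy
`X₂ < X₁`. Some player then invests more at the higher tax `t₁` than at `t₂`, say `b₂ < b₁`. Her
rate of return at `(X₁, t₁)` is nonnegative, so it is positive at `(X₁, t₂)`, and she must also
invest at `t₂`: otherwise moving from `0` to `X₁ - X₂` would be profitable. At both equilibria the
return therefore exceeds the tax, where her effective rate is
`h(x, t) = (r x - t)(1 - p x) - k (1 + t) p x`.

For small `δ > 0` compare a reduction of her investment by `δ` at `t₁` with an increase by `δ` at
`t₂`. Put `D₁ = h(X₁, t₁) - h(X₁ - δ, t₁)` and `D₂ = h(X₂ + δ, t₂) - h(X₂, t₂)`. That neither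
move pays means `0 ≤ δ h(X₁ - δ, t₁) + b₁ D₁` and `δ h(X₂ + δ, t₂) + b₂ D₂ ≤ 0`, and the second
inequality forces `D₂ ≤ 0`. Since `h` is concave in `x`, and since `k ≥ 1` makes its increments in
`x` decrease with the tax, `D₁ ≤ D₂` and `h(X₁ - δ, t₁) < h(X₂ + δ, t₂)`. As `b₂ < b₁`, the
two conditions contradict each other.
-/

open Real Set

noncomputable section

lemma concaveOn_add_le_add_of_mem_segment {𝕜 E β : Type*} [Semiring 𝕜] [PartialOrder 𝕜]
    [AddCommGroup E] [Module 𝕜 E] [AddCommMonoid β] [PartialOrder β] [IsOrderedAddMonoid β]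
    [Module 𝕜 β] {s : Set E} {f : E → β} (hf : ConcaveOn 𝕜 s f) {a b c d : E}
    (ha : a ∈ s) (hb : b ∈ s) (hc : c ∈ segment 𝕜 a b) (hsum : c + d = a + b) :
    f a + f b ≤ f c + f d := by
  obtain ⟨v, w, hv, hw, hvw, rfl⟩ := hc
  have hd : d = w • a + v • b := by
    refine add_left_cancel (hsum.trans ?_)
    calc a + b = (v + w) • a + (v + w) • b := by rw [hvw, one_smul, one_smul]
      _ = (v • a + w • b) + (w • a + v • b) := by rw [add_smul, add_smul]; abel
  calc f a + f b = (v + w) • f a + (v + w) • f b := by rw [hvw, one_smul, one_smul]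
    _ = (v • f a + w • f b) + (w • f a + v • f b) := by rw [add_smul, add_smul]; abel
    _ ≤ f (v • a + w • b) + f d :=
      add_le_add (hf.2 ha hb hv hw hvw) (hd ▸ hf.2 ha hb hw hv (by rw [add_comm, hvw]))

lemma exists_pos_le_lt_map_sub {f : ℝ → ℝ} {b c ε : ℝ} (hf : ContinuousAt f b) (hc : c < f b)
    (hε : 0 < ε) : ∃ δ, 0 < δ ∧ δ ≤ ε ∧ c < f (b - δ) := by
  have htendsto : Filter.Tendsto (fun δ => b - δ) (nhdsWithin 0 (Ioi 0)) (nhds b) :=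
    ((continuous_const.sub continuous_id).tendsto' 0 b (sub_zero b)).mono_left nhdsWithin_le_nhds
  have hev := (hf.tendsto.comp htendsto).eventually_const_lt hc
  obtain ⟨δ, hlt, hδ, hδε⟩ := (hev.and (Ioc_mem_nhdsGT hε)).exists
  exact ⟨δ, hδ, hδε, hlt⟩

/-- If a player who holds `v` cannot gain by raising the total from `a` to `a + δ` at rate `g`,
then one who holds `u > v` gains by lowering it from `b` to `b - δ` at rate `f`. -/
lemma mul_lt_sub_mul_of_add_mul_le {f g : ℝ → ℝ} {a b δ u v : ℝ}
    (hg : ConcaveOn ℝ (Icc a b) g) (hδ : 0 < δ) (hab : a + δ ≤ b - δ)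
    (hfg : f (b - δ) < g (b - δ)) (hincr : f b - f (b - δ) ≤ g b - g (b - δ))
    (hga : 0 ≤ g a) (hv : 0 ≤ v) (hvu : v ≤ u) (hraise : (v + δ) * g (a + δ) ≤ v * g a) :
    u * f b < (u - δ) * f (b - δ) := by
  have ha : a ∈ Icc a b := ⟨le_rfl, by linarith⟩
  have hb : b ∈ Icc a b := ⟨by linarith, le_rfl⟩
  have hdecr : g (a + δ) ≤ g a := by
    by_contra! hlt
    have : v * g a < (v + δ) * g (a + δ) :=
      mul_lt_mul'' (by linarith) hlt hv hga
    exact hraise.not_gt this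
  have hg_right : g (b - δ) ≤ g (a + δ) :=
    hg.right_le_of_le_left'' ha ⟨by linarith, by linarith⟩ (by linarith) hab hdecr
  have hg_incr : g b - g (b - δ) ≤ g (a + δ) - g a := by
    have := concaveOn_add_le_add_of_mem_segment hg ha hb (c := a + δ) (d := b - δ)
      (by rw [segment_eq_Icc (by linarith)]; constructor <;> linarith) (by ring)
    linarith
  have hscaled : u * (f b - f (b - δ)) ≤ v * (g (a + δ) - g a) := by
    calc u * (f b - f (b - δ)) ≤ v * (f b - f (b - δ)) :=
          mul_le_mul_of_nonpos_right hvu (by linarith)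
      _ ≤ v * (g (a + δ) - g a) := mul_le_mul_of_nonneg_left (by linarith) hv
  have hrate : δ * f (b - δ) < δ * g (a + δ) :=
    mul_lt_mul_of_pos_left (hfg.trans_le hg_right) hδ
  linarith

section EffectiveRate

variable {p r : ℝ → ℝ} {α k t x : ℝ}

lemma effRate_neg_of_failure_eq_one (hk : 0 < k) (ht : -1 < t) (hp : p x = 1) :
    effRate p r α k x t < 0 := by
  have : 0 < k * (1 + t) ^ α := mul_pos hk (rpow_pos_of_pos (by linarith) α)
  unfold effRate
  split_ifs <;> rw [hp] <;> linarith

lemma effRate_neg_of_return_le_tax (hα : α ≠ 0) (hk : 0 < k) (ht : -1 < t)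
    (hp : p x ∈ Ioc 0 1) (hr : r x ≤ t) : effRate p r α k x t < 0 := by
  have hloss : 0 < (1 + t) ^ α * p x := mul_pos (rpow_pos_of_pos (by linarith) α) hp.1
  unfold effRate
  split_ifs with h
  · have hzero : r x - t = 0 := by linarith
    rw [hzero, zero_rpow hα]
    linarith [mul_pos hk hloss]
  · have hshort : 0 ≤ (t - r x) ^ α * (1 - p x) :=
      mul_nonneg (rpow_nonneg (by linarith) α) (by linarith [hp.2])
    exact neg_neg_of_pos (mul_pos hk (by linarith))

/-- The effective rate of return of a player with `α = 1`, as a function of the utilization, in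
the region `t ≤ r x`. It is given by the same formula everywhere, but differs from `effRate`
where `r x < t`. -/
def activeRate (p r : ℝ → ℝ) (k t x : ℝ) : ℝ :=
  (r x - t) * (1 - p x) - k * (1 + t) * p x

lemma effRate_one_eq_activeRate (h : t ≤ r x) : effRate p r 1 k x t = activeRate p r k t x := by
  simp [effRate, activeRate, h]

lemma activeRate_lt_activeRate_of_tax_lt {t₁ t₂ : ℝ} (hk : 1 ≤ k) (ht : t₂ < t₁)
    (hp : 0 ≤ p x) : activeRate p r k t₁ x < activeRate p r k t₂ x := by
  have hsub : activeRate p r k t₂ x - activeRate p r k t₁ x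
      = (t₁ - t₂) * (1 + (k - 1) * p x) := by unfold activeRate; ring
  have : 0 < (t₁ - t₂) * (1 + (k - 1) * p x) :=
    mul_pos (by linarith) (add_pos_of_pos_of_nonneg one_pos (mul_nonneg (by linarith) hp))
  linarith

lemma activeRate_sub_le_activeRate_sub {t₁ t₂ y : ℝ} (hk : 1 ≤ k) (ht : t₂ ≤ t₁)
    (hp : p x ≤ p y) :
    activeRate p r k t₁ y - activeRate p r k t₁ x
      ≤ activeRate p r k t₂ y - activeRate p r k t₂ x := by
  have : 0 ≤ (t₁ - t₂) * (k - 1) * (p y - p x) :=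
    mul_nonneg (mul_nonneg (by linarith) (by linarith)) (by linarith)
  unfold activeRate
  linarith

/-- The gain `(r - t)(1 - p)` is concave as a product of nonnegative concave functions that vary
in opposite directions. -/
lemma concaveOn_activeRate {s : Set ℝ} (hp : ConvexOn ℝ s p) (hr : ConcaveOn ℝ s r)
    (hp_mono : MonotoneOn p s) (hr_mono : MonotoneOn r s) (hp_le : ∀ x ∈ s, p x ≤ 1)
    (hr_ge : ∀ x ∈ s, t ≤ r x) (hkt : 0 ≤ k * (1 + t)) :
    ConcaveOn ℝ s (activeRate p r k t) := by
  have hmargin : ConcaveOn ℝ s (fun x => r x - t) := hr.sub (convexOn_const t hr.1)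
  have hsurvival : ConcaveOn ℝ s (fun x => 1 - p x) := (concaveOn_const 1 hp.1).sub hp
  have hvary : AntivaryOn (fun x => r x - t) (fun x => 1 - p x) s :=
    MonotoneOn.antivaryOn (fun _ hx _ hy h => sub_le_sub_right (hr_mono hx hy h) t)
      (fun _ hx _ hy h => sub_le_sub_left (hp_mono hx hy h) 1)
  have hgain : ConcaveOn ℝ s ((fun x => r x - t) * (fun x => 1 - p x)) :=
    hmargin.mul hsurvival (fun x hx => sub_nonneg.2 (hr_ge x hx))
      (fun x hx => sub_nonneg.2 (hp_le x hx)) hvary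
  exact hgain.sub (hp.smul hkt)

end EffectiveRate

namespace IsBestResponse

variable {p r : ℝ → ℝ} {α k t xbar b : ℝ}

lemma effRate_nonneg (h : IsBestResponse p r α k t xbar b) (hα : α ≠ 0) (hb : 0 < b) :
    0 ≤ effRate p r α k (b + xbar) t := by
  have hzero := h.2 0 ⟨le_rfl, zero_le_one⟩
  rw [zero_rpow hα, zero_mul] at hzero
  exact nonneg_of_mul_nonneg_right hzero (rpow_pos_of_pos hb α)

lemma pos_of_effRate_pos (h : IsBestResponse p r α k t xbar b) (hα : α ≠ 0) {y : ℝ}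
    (hy : y ∈ Ioc (0 : ℝ) 1) (hrate : 0 < effRate p r α k (y + xbar) t) : 0 < b := by
  refine h.1.1.lt_of_ne' fun hb => ?_
  have hle := h.2 y ⟨hy.1.le, hy.2⟩
  rw [hb, zero_rpow hα, zero_mul] at hle
  exact hle.not_gt (mul_pos (rpow_pos_of_pos hy.1 α) hrate)

lemma total_lt_one (h : IsBestResponse p r α k t xbar b) (hα : α ≠ 0) (hk : 0 < k)
    (ht : -1 < t) (hb : 0 < b) (hp_one : ∀ x, 1 ≤ x → p x = 1) : b + xbar < 1 := by
  by_contra! hge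
  exact (h.effRate_nonneg hα hb).not_gt (effRate_neg_of_failure_eq_one hk ht (hp_one _ hge))

lemma tax_lt_return (h : IsBestResponse p r α k t xbar b) (hα : α ≠ 0) (hk : 0 < k)
    (ht : -1 < t) (hb : 0 < b) (hp : p (b + xbar) ∈ Ioc 0 1) : t < r (b + xbar) := by
  by_contra! hle
  exact (h.effRate_nonneg hα hb).not_gt (effRate_neg_of_return_le_tax hα hk ht hp hle)

lemma mul_activeRate_le (h : IsBestResponse p r 1 k t xbar b) {y : ℝ} (hy : y ∈ Icc (0 : ℝ) 1)
    (hr_y : t ≤ r (y + xbar)) (hr_b : t ≤ r (b + xbar)) :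
    y * activeRate p r k t (y + xbar) ≤ b * activeRate p r k t (b + xbar) := by
  simpa only [rpow_one, effRate_one_eq_activeRate hr_y, effRate_one_eq_activeRate hr_b]
    using h.2 y hy

lemma le_of_total_lt_of_tax_lt_return {t₁ t₂ s₁ s₂ b₁ b₂ : ℝ}
    (h₁ : IsBestResponse p r 1 k t₁ s₁ b₁) (h₂ : IsBestResponse p r 1 k t₂ s₂ b₂)
    (hk : 1 ≤ k) (ht₂ : -1 < t₂) (ht : t₂ < t₁) (hX : b₂ + s₂ < b₁ + s₁) (hb₂ : 0 < b₂)
    (hp : ConvexOn ℝ (Icc (b₂ + s₂) (b₁ + s₁)) p) (hr : ConcaveOn ℝ (Icc (b₂ + s₂) (b₁ + s₁)) r)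
    (hp_mono : MonotoneOn p (Icc (b₂ + s₂) (b₁ + s₁)))
    (hr_mono : MonotoneOn r (Icc (b₂ + s₂) (b₁ + s₁)))
    (hp_unit : ∀ x ∈ Icc (b₂ + s₂) (b₁ + s₁), p x ∈ Icc (0 : ℝ) 1)
    (hr_cont : ContinuousAt r (b₁ + s₁)) (hr₁ : t₁ < r (b₁ + s₁)) (hr₂ : t₂ < r (b₂ + s₂)) :
    b₁ ≤ b₂ := by
  by_contra! hb
  obtain ⟨δ, hδ, hδ_le, hr₁'⟩ := exists_pos_le_lt_map_sub hr_cont hr₁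
    (lt_min (sub_pos.2 hb) (half_pos (sub_pos.2 hX)))
  obtain ⟨hδb, hδX⟩ := le_min_iff.1 hδ_le
  have hleft : b₂ + s₂ ∈ Icc (b₂ + s₂) (b₁ + s₁) := left_mem_Icc.2 hX.le
  have hright : b₁ + s₁ ∈ Icc (b₂ + s₂) (b₁ + s₁) := right_mem_Icc.2 hX.le
  have hlower : b₁ + s₁ - δ ∈ Icc (b₂ + s₂) (b₁ + s₁) := ⟨by linarith, by linarith⟩
  have hr_ge : ∀ x ∈ Icc (b₂ + s₂) (b₁ + s₁), t₂ ≤ r x :=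
    fun x hx => hr₂.le.trans (hr_mono hleft hx hx.1)
  have hreduce : (b₁ - δ) * activeRate p r k t₁ (b₁ + s₁ - δ)
      ≤ b₁ * activeRate p r k t₁ (b₁ + s₁) := by
    have hshift : b₁ - δ + s₁ = b₁ + s₁ - δ := by ring
    exact hshift ▸ h₁.mul_activeRate_le ⟨by linarith, by linarith [h₁.1.2]⟩
      (hshift ▸ hr₁'.le) hr₁.le
  have hraise : (b₂ + δ) * activeRate p r k t₂ (b₂ + s₂ + δ)
      ≤ b₂ * activeRate p r k t₂ (b₂ + s₂) := by
    rw [add_right_comm]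
    exact h₂.mul_activeRate_le ⟨by linarith, by linarith [h₁.1.2]⟩
      (hr_ge _ ⟨by linarith, by linarith⟩) hr₂.le
  have hrate₂ : 0 ≤ activeRate p r k t₂ (b₂ + s₂) :=
    effRate_one_eq_activeRate hr₂.le ▸ h₂.effRate_nonneg one_ne_zero hb₂
  have hconc : ConcaveOn ℝ (Icc (b₂ + s₂) (b₁ + s₁)) (activeRate p r k t₂) :=
    concaveOn_activeRate hp hr hp_mono hr_mono (fun x hx => (hp_unit x hx).2) hr_ge
      (mul_nonneg (by linarith) (by linarith))
  exact hreduce.not_gt <| mul_lt_sub_mul_of_add_mul_le hconc hδ (by linarith)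
    (activeRate_lt_activeRate_of_tax_lt hk ht (hp_unit _ hlower).1)
    (activeRate_sub_le_activeRate_sub hk ht.le (hp_mono hlower hright hlower.2))
    hrate₂ hb₂.le hb.le hraise

lemma pos_of_lower_tax {t₁ t₂ s₁ s₂ b₁ b₂ : ℝ}
    (h₁ : IsBestResponse p r 1 k t₁ s₁ b₁) (h₂ : IsBestResponse p r 1 k t₂ s₂ b₂)
    (hk : 1 ≤ k) (ht : t₂ < t₁) (hs₂ : 0 ≤ s₂) (hb₁ : 0 < b₁) (hX : b₂ + s₂ < b₁ + s₁)
    (hX₁ : b₁ + s₁ ≤ 1) (hp : 0 ≤ p (b₁ + s₁)) (hr : t₁ ≤ r (b₁ + s₁)) : 0 < b₂ := by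
  have hrate₁ : 0 ≤ activeRate p r k t₁ (b₁ + s₁) :=
    effRate_one_eq_activeRate hr ▸ h₁.effRate_nonneg one_ne_zero hb₁
  have hrate₂ : 0 < effRate p r 1 k (b₁ + s₁) t₂ := by
    rw [effRate_one_eq_activeRate (by linarith)]
    exact hrate₁.trans_lt (activeRate_lt_activeRate_of_tax_lt hk ht hp)
  exact h₂.pos_of_effRate_pos one_ne_zero (y := b₁ + s₁ - s₂)
    ⟨by linarith [h₂.1.1], by linarith⟩ (by rwa [sub_add_cancel])

theorem le_of_total_lt {t₁ t₂ s₁ s₂ b₁ b₂ : ℝ}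
    (h₁ : IsBestResponse p r 1 k t₁ s₁ b₁) (h₂ : IsBestResponse p r 1 k t₂ s₂ b₂)
    (hp : ConvexOn ℝ (Ico 0 1) p) (hp_mono : StrictMonoOn p (Ico 0 1))
    (hp_one : ∀ x, 1 ≤ x → p x = 1) (hp_unit : ∀ x ∈ Ico (0 : ℝ) 1, p x ∈ Icc (0 : ℝ) 1)
    (hr : ConcaveOn ℝ (Ico 0 1) r) (hr_mono : MonotoneOn r (Ico 0 1))
    (hk : 1 ≤ k) (ht₂ : -1 < t₂) (ht : t₂ < t₁) (hs₂ : 0 ≤ s₂)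
    (hX : b₂ + s₂ < b₁ + s₁) : b₁ ≤ b₂ := by
  by_contra! hb
  have hk₀ : 0 < k := by linarith
  have ht₁ : -1 < t₁ := ht₂.trans ht
  have hb₁ : 0 < b₁ := h₂.1.1.trans_lt hb
  have hp_pos : ∀ x ∈ Ioo (0 : ℝ) 1, p x ∈ Ioc 0 1 := fun x hx =>
    have h0 : (0 : ℝ) ∈ Ico 0 1 := ⟨le_rfl, one_pos⟩
    have hx' : x ∈ Ico (0 : ℝ) 1 := ⟨hx.1.le, hx.2⟩
    ⟨(hp_unit 0 h0).1.trans_lt (hp_mono h0 hx' hx.1), (hp_unit x hx').2⟩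
  have hX₁ : b₁ + s₁ ∈ Ioo 0 1 :=
    ⟨by linarith [h₂.1.1], h₁.total_lt_one one_ne_zero hk₀ ht₁ hb₁ hp_one⟩
  have hr₁ := h₁.tax_lt_return one_ne_zero hk₀ ht₁ hb₁ (hp_pos _ hX₁)
  have hb₂ : 0 < b₂ :=
    h₁.pos_of_lower_tax h₂ hk ht hs₂ hb₁ hX hX₁.2.le (hp_pos _ hX₁).1.le hr₁.le
  have hX₂ : b₂ + s₂ ∈ Ioo 0 1 := ⟨by linarith, hX.trans hX₁.2⟩
  have hr₂ := h₂.tax_lt_return one_ne_zero hk₀ ht₂ hb₂ (hp_pos _ hX₂)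
  have hr_cont : ContinuousAt r (b₁ + s₁) :=
    hr.continuousOn_interior.continuousAt (by rw [interior_Ico]; exact Ioo_mem_nhds hX₁.1 hX₁.2)
  have hsub : Icc (b₂ + s₂) (b₁ + s₁) ⊆ Ico 0 1 := Icc_subset_Ico hX₂.1.le hX₁.2
  exact hb.not_ge <| h₁.le_of_total_lt_of_tax_lt_return h₂ hk ht₂ ht hX hb₂
    (hp.subset hsub (convex_Icc _ _)) (hr.subset hsub (convex_Icc _ _))
    (hp_mono.monotoneOn.mono hsub) (hr_mono.mono hsub) (fun x hx => hp_unit x (hsub hx))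
    hr_cont hr₁ hr₂

end IsBestResponse

lemma IsPNE.isBestResponse {ι : Type*} [Fintype ι] [DecidableEq ι] {p r : ℝ → ℝ} {α k : ι → ℝ}
    {t : ℝ} {x : ι → ℝ} (h : IsPNE p r α k t x) (i : ι) :
    IsBestResponse p r (α i) (k i) t (∑ j ∈ Finset.univ.erase i, x j) (x i) :=
  ⟨h.1 i, h.2 i⟩

theorem statement10_general {ι : Type*} [Fintype ι] [DecidableEq ι]
    {p r : ℝ → ℝ} {α k : ι → ℝ} {t₁ t₂ : ℝ} {x₁ x₂ : ι → ℝ}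
    (hp : ConvexOn ℝ (Ico 0 1) p) (hp_mono : StrictMonoOn p (Ico 0 1))
    (hp_one : ∀ x, 1 ≤ x → p x = 1) (hp_unit : ∀ x ∈ Ico (0 : ℝ) 1, p x ∈ Icc (0 : ℝ) 1)
    (hr : ConcaveOn ℝ (Ico 0 1) r) (hr_mono : MonotoneOn r (Ico 0 1))
    (hα : ∀ i, α i = 1) (hk : ∀ i, 1 ≤ k i) (ht₂ : -1 < t₂) (ht : t₂ < t₁)
    (hx₁ : IsPNE p r α k t₁ x₁) (hx₂ : IsPNE p r α k t₂ x₂) :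
    ∑ i, x₁ i ≤ ∑ i, x₂ i := by
  by_contra! hlt
  refine hlt.not_ge (Finset.sum_le_sum fun i hi => ?_)
  have h₁ := hα i ▸ hx₁.isBestResponse i
  have h₂ := hα i ▸ hx₂.isBestResponse i
  exact h₁.le_of_total_lt h₂ hp hp_mono hp_one hp_unit hr hr_mono (hk i) ht₂ ht
    (Finset.sum_nonneg fun j _ => (hx₂.1 j).1)
    (by rwa [Finset.add_sum_erase _ _ hi, Finset.add_sum_erase _ _ hi])

/-- for a strictly increasing rate of return, if every player has
`α_i = 1` and `k_i ≥ 1`, then the PNE utilization is non-increasing in the tax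
rate: `t_2 < t_1 < t̄` implies `x^{t_1}_NE ≤ x^{t_2}_NE`. -/
theorem statement10 {ι : Type*} [Fintype ι] [DecidableEq ι] [Nonempty ι]
    (p r : ℝ → ℝ) (α k : ι → ℝ)
    (hp : FailureProb p) (hr : RateOfReturn r)
    (hinc : StrictMonoOn r (Icc (0:ℝ) 1))
    (hα : ∀ i, α i = 1) (hk : ∀ i, 1 ≤ k i)
    (t1 t2 : ℝ) (ht2 : 0 ≤ t2) (h21 : t2 < t1) (h1 : t1 < tbar p r α k)
    (x1 x2 : ι → ℝ)
    (hx1 : IsPNE p r α k t1 x1) (hx2 : IsPNE p r α k t2 x2) :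
    ∑ i, x1 i ≤ ∑ i, x2 i := by
  have hsub : Ico (0 : ℝ) 1 ⊆ Icc 0 1 := Ico_subset_Icc_self
  exact statement10_general hp.convexOn hp.strictMonoOn hp.eq_one (fun x _ => hp.mem_unit x)
    (hr.concaveOn.subset hsub (convex_Ico 0 1)) (hinc.monotoneOn.mono hsub) hα hk
    (by linarith) h21 hx1 hx2
end
end
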